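/- Let A be a commutative Noetherian ring, let a ∈ A, let Â denote the a-adic completion of A, and let M be a finitely generated A-module. If the base change Â ⊗_A M is a projective Â-module and the localization M[1/a] = A[1/a] ⊗_A M is a projective A[1/a]-module, then M is a projective A-module (hence finite projective). -/

import Mathlib

open TensorProduct

lemma aux_flat_prod {A M N : Type*} [CommRing A] [AddCommGroup M] [Module A M] [AddCommGroup N]
    [Module A N] [Module.Flat A M] [Module.Flat A N] : Module.Flat A (M × N) := by
  rw [Module.Flat.iff_lTensor_injective']
  intro I
  have e : LinearMap.lTensor (M × N) (Submodule.subtype I) =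
      (TensorProduct.prodLeft A A M N A).symm.toLinearMap ∘ₗ
      (LinearMap.prodMap (LinearMap.lTensor M (Submodule.subtype I))
        (LinearMap.lTensor N (Submodule.subtype I))) ∘ₗ
      (TensorProduct.prodLeft A A M N I).toLinearMap := by
    rw [← LinearMap.cancel_left (TensorProduct.prodLeft A A M N A).injective]
    apply TensorProduct.ext'
    rintro ⟨x, y⟩ z
    simp
  rw [e]
  simp only [LinearMap.coe_comp, LinearEquiv.coe_coe, EmbeddingLike.comp_injective,
    EquivLike.injective_comp]
  rw [LinearMap.coe_prodMap]
  exact (Module.Flat.lTensor_preserves_injective_linearMap _ I.subtype_injective).prodMap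
    (Module.Flat.lTensor_preserves_injective_linearMap _ I.subtype_injective)

lemma aux_ne_top {A F : Type*} [CommRing A] [AddCommGroup F] [Module A F] {m : Ideal A}
    (hm : m.IsMaximal) (g : F →ₗ[A] A ⧸ m) (x : F) (hx : g x = 1) :
    m • (⊤ : Submodule A F) ≠ ⊤ := by
  intro h
  have h1 := Submodule.smul_top_le_comap_smul_top m g
  rw [h] at h1
  have h2 : g x ∈ m • (⊤ : Submodule A (A ⧸ m)) := h1 (Submodule.mem_top)
  have h3 : m • (⊤ : Submodule A (A ⧸ m)) ≤ ⊥ := by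
    rw [Submodule.smul_le]
    intro r hr n _
    obtain ⟨n, rfl⟩ := Ideal.Quotient.mk_surjective n
    rw [Submodule.mem_bot, Algebra.smul_def, Ideal.Quotient.algebraMap_eq,
      Ideal.Quotient.eq_zero_iff_mem.mpr hr, zero_mul]
  have h4 := h3 h2
  rw [hx, Submodule.mem_bot] at h4
  have := Ideal.Quotient.nontrivial_iff.mpr hm.ne_top
  exact one_ne_zero h4

/-- Let `A` be a commutative Noetherian ring, `a ∈ A`, `Â` the `a`-adic completion of `A`,
and `M` a finitely generated `A`-module.  If `Â ⊗_A M` is projective over `Â` and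
`A[1/a] ⊗_A M` is projective over `A[1/a]`, then `M` is projective over `A`. -/
theorem projective_of_completion_and_localization_projective
    {A : Type*} [CommRing A] [IsNoetherianRing A] (a : A)
    (M : Type*) [AddCommGroup M] [Module A M] [Module.Finite A M]
    (h1 : Module.Projective (AdicCompletion (Ideal.span {a}) A)
      (AdicCompletion (Ideal.span {a}) A ⊗[A] M))
    (h2 : Module.Projective (Localization.Away a) (Localization.Away a ⊗[A] M)) :
    Module.Projective A M := by
  have f1 : Module.Flat A (AdicCompletion (Ideal.span {a}) A ⊗[A] M) :=
    Module.Flat.trans A (AdicCompletion (Ideal.span {a}) A) _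
  have f2 : Module.Flat A (Localization.Away a) :=
    IsLocalization.flat _ (Submonoid.powers a)
  have f3 : Module.Flat A (Localization.Away a ⊗[A] M) :=
    Module.Flat.trans A (Localization.Away a) _
  let F := AdicCompletion (Ideal.span {a}) A × Localization.Away a
  have f4 : Module.Flat A F := aux_flat_prod
  have f5 : Module.Flat A (F ⊗[A] M) :=
    have := aux_flat_prod (A := A) (M := AdicCompletion (Ideal.span {a}) A ⊗[A] M)
      (N := Localization.Away a ⊗[A] M)
    Module.Flat.of_linearEquiv (TensorProduct.prodLeft A A _ _ _)
  have f6 : Module.FaithfullyFlat A F := by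
    refine ⟨fun m hm => ?_⟩
    by_cases ha : a ∈ m
    · have hle : Ideal.span {a} ^ 1 ≤ m := by
        rw [pow_one, Ideal.span_le]; simpa using ha
      let φ : AdicCompletion (Ideal.span {a}) A →ₐ[A] A ⧸ m :=
        (Ideal.Quotient.factorₐ A hle).comp (AdicCompletion.evalₐ (Ideal.span {a}) 1)
      exact aux_ne_top hm (φ.toLinearMap ∘ₗ LinearMap.fst A _ _) ((1, 0) : F) (map_one φ)
    · have hu : IsUnit (algebraMap A (A ⧸ m) a) := by
        letI := Ideal.Quotient.field m
        rw [isUnit_iff_ne_zero]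
        exact fun h => ha (Ideal.Quotient.eq_zero_iff_mem.mp h)
      let ψ : Localization.Away a →ₐ[A] A ⧸ m :=
        { IsLocalization.Away.lift a hu with
          commutes' := fun r => IsLocalization.Away.lift_eq a hu r }
      exact aux_ne_top hm (ψ.toLinearMap ∘ₗ LinearMap.snd A _ _) ((0, 1) : F) (map_one ψ)
  have f7 : Module.Flat A M := by
    rw [Module.Flat.iff_lTensor_injective']
    intro I
    rw [← Module.FaithfullyFlat.lTensor_injective_iff_injective A F]
    have := Module.Flat.lTensor_preserves_injective_linearMap (M := F ⊗[A] M) _ I.subtype_injective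
    rw [LinearMap.lTensor_tensor] at this
    simpa using this
  have : Module.FinitePresentation A M := Module.finitePresentation_of_finite A M
  exact Module.Flat.projective_of_finitePresentation
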